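/- arXiv:1205.2807 — 3 statements merged into one kernel-verified Lean document; each statement's English description precedes it below -/
import Mathlib

section
/- For every real number D with 0 ≤ D ≤ 1/2, one has Real.sqrt(D/2) / (1/2 + D) ≥ Real.sqrt(D(1-D)), with strict inequality for 0 < D < 1/2. -/
/-- Eve's two-way advantage on agreement dominates the one-way BB84 advantage:
`√(D/2)/(1/2 + D) ≥ √(D(1-D))` on `[0, 1/2]`, strictly on `(0, 1/2)`. -/
theorem match_advantage_ge_oneway (D : ℝ) (hD0 : 0 ≤ D) (hD1 : D ≤ 1/2) :
    Real.sqrt (D / 2) / (1/2 + D) ≥ Real.sqrt (D * (1 - D)) ∧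
    (0 < D → D < 1/2 → Real.sqrt (D / 2) / (1/2 + D) > Real.sqrt (D * (1 - D))) := by
  have hp : (0:ℝ) < 1/2 + D := by linarith
  have key : D / 2 - D * (1 - D) * (1/2 + D) ^ 2 = D * ((1/2 - D) ^ 2 * (D + 1)) := by ring
  have e : Real.sqrt (D * (1 - D)) * (1/2 + D) = Real.sqrt (D * (1 - D) * (1/2 + D) ^ 2) := by
    rw [Real.sqrt_mul (mul_nonneg hD0 (by linarith)), Real.sqrt_sq hp.le]
  refine ⟨?_, fun h0 h1 => ?_⟩
  · rw [ge_iff_le, le_div_iff₀ hp, e]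
    apply Real.sqrt_le_sqrt
    have : 0 ≤ D * ((1/2 - D) ^ 2 * (D + 1)) := by positivity
    linarith
  · rw [gt_iff_lt, lt_div_iff₀ hp, e]
    apply Real.sqrt_lt_sqrt
    · exact mul_nonneg (mul_nonneg hD0 (by linarith)) (sq_nonneg _)
    · have h2 : 0 < 1/2 - D := by linarith
      have : 0 < D * ((1/2 - D) ^ 2 * (D + 1)) := by positivity
      linarith
end

section
/- For every real number D with 0 < D ≤ 0.087, Real.sqrt(D/2)·(3 + 2D)/(2·(1 + 2D)) > Real.sqrt(D(1-D)). -/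
/-- For `0 < D ≤ 0.087`, the two-way average advantage strictly exceeds
the one-way BB84 advantage. -/
theorem twoway_beats_oneway_small_D (D : ℝ) (hD0 : 0 < D) (hD1 : D ≤ 0.087) :
    Real.sqrt (D / 2) * (3 + 2 * D) / (2 * (1 + 2 * D)) > Real.sqrt (D * (1 - D)) := by
  have hp : 0 < 1 - 12 * D + 4 * D ^ 2 + 32 * D ^ 3 := by
    norm_num at hD1
    nlinarith [mul_nonneg hD0.le (sq_nonneg (D - 87/1000)), sq_nonneg (D - 87/1000)]
  have h1 : (0:ℝ) < 2 * (1 + 2 * D) := by positivity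
  rw [gt_iff_lt, lt_div_iff₀ h1]
  apply lt_of_pow_lt_pow_left₀ 2 (by positivity)
  have h2 : 0 ≤ D * (1 - D) := mul_nonneg hD0.le (by norm_num at hD1; linarith)
  have h3 : 0 ≤ D / 2 := by positivity
  rw [mul_pow, mul_pow (Real.sqrt (D / 2)), Real.sq_sqrt h2, Real.sq_sqrt h3]
  have := mul_pos hD0 hp
  nlinarith
end

section
/- For every real number D with 0 ≤ D ≤ 1/2, Real.sqrt(D/2)·(5 + 2D)/(4·(1 + D)) ≤ Real.sqrt(D(1-D)), with strict inequality for 0 < D < 1/2. -/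
/-- Against Hadamard Bob, the two-way average advantage never exceeds the one-way
BB84 advantage: `√(D/2)(5+2D)/(4(1+D)) ≤ √(D(1-D))` on `[0, 1/2]`, strictly
on `(0, 1/2)`. -/
theorem hadamard_twoway_le_oneway (D : ℝ) (hD0 : 0 ≤ D) (hD1 : D ≤ 1/2) :
    Real.sqrt (D / 2) * (5 + 2 * D) / (4 * (1 + D)) ≤ Real.sqrt (D * (1 - D)) ∧
    (0 < D → D < 1/2 →
      Real.sqrt (D / 2) * (5 + 2 * D) / (4 * (1 + D)) < Real.sqrt (D * (1 - D))) := by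
  have h1 : 0 < 1 + D := by linarith
  have key : D * (1 - D) - (Real.sqrt (D / 2) * (5 + 2 * D) / (4 * (1 + D))) ^ 2
      = D * ((1 - 2 * D) * (7 + 26 * D + 16 * D ^ 2)) / (32 * (1 + D) ^ 2) := by
    rw [div_pow, mul_pow, Real.sq_sqrt (by linarith)]
    field_simp
    ring
  constructor
  · apply Real.le_sqrt_of_sq_le
    have h2 : 0 ≤ 1 - 2 * D := by linarith
    have : 0 ≤ D * ((1 - 2 * D) * (7 + 26 * D + 16 * D ^ 2)) / (32 * (1 + D) ^ 2) := by
      positivity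
    linarith
  · intro h0 h3
    apply Real.lt_sqrt_of_sq_lt
    have h2 : 0 < 1 - 2 * D := by linarith
    have : 0 < D * ((1 - 2 * D) * (7 + 26 * D + 16 * D ^ 2)) / (32 * (1 + D) ^ 2) := by
      positivity
    linarith
end
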